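/- For probability measures μ₁,…,μ_N ∈ 𝒫_p(ℝ^d), the multi-marginal optimal transport value C_{p-MM} = inf_{γ∈Π(μ₁,…,μ_N)} ∫ c_p dγ equals the coupled two-marginal barycenter value C_{p-C2M} = inf_{ν∈𝒫_p(ℝ^d)} Σᵢ λᵢ W_p^p(μᵢ, ν). -/

import Mathlib

open Finset MeasureTheory
open scoped ENNReal

/-- The `p`-th power Wasserstein cost `W_p^p(μ,ν)` on `ℝ^d`, defined as the
infimum over couplings of the transport cost `∫ ‖x-y‖^p`. -/
noncomputable def wassersteinPPow (d : ℕ) (p : ℝ)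
    (μ ν : Measure (EuclideanSpace ℝ (Fin d))) : ℝ≥0∞ :=
  ⨅ η : {η : Measure (EuclideanSpace ℝ (Fin d) × EuclideanSpace ℝ (Fin d)) //
      η.map Prod.fst = μ ∧ η.map Prod.snd = ν},
    ∫⁻ q, ENNReal.ofReal (‖q.1 - q.2‖ ^ p) ∂(η.1)

open ProbabilityTheory

/-- Product of finitely many Markov kernels with a common source. -/
theorem exists_pi_kernel {N : ℕ} {α β : Type*} [MeasurableSpace α] [MeasurableSpace β]
    (κ : Fin N → Kernel α β) [∀ i, IsMarkovKernel (κ i)] :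
    ∃ K : Kernel α (Fin N → β), IsMarkovKernel K ∧ ∀ i, K.map (fun x => x i) = κ i := by
  have hm : Measurable (fun a => Measure.pi (fun i => κ i a)) := by
    refine Measurable.measure_of_isPiSystem_of_isProbabilityMeasure generateFrom_pi.symm
      isPiSystem_pi ?_
    rintro _ ⟨s, hs, rfl⟩
    simp only [Measure.pi_pi]
    refine Finset.measurable_prod _ fun i _ => ?_
    exact (κ i).measurable_coe (hs i (Set.mem_univ i))
  refine ⟨⟨_, hm⟩, ⟨fun a => ?_⟩, fun i => ?_⟩
  · change IsProbabilityMeasure (Measure.pi (fun i => κ i a))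
    infer_instance
  · ext1 a
    rw [Kernel.map_apply _ (measurable_pi_apply i)]
    exact (measurePreserving_eval (fun i => κ i a) i).map_eq

/-- Gluing along a common second marginal. -/
theorem exists_glue {N : ℕ} {E : Type*} [MeasurableSpace E] [StandardBorelSpace E] [Nonempty E]
    (ν : Measure E) [IsProbabilityMeasure ν] (η : Fin N → Measure (E × E))
    (h : ∀ i, (η i).map Prod.snd = ν) :
    ∃ Γ : Measure (E × (Fin N → E)), ∀ i, Γ.map (fun q => (q.2 i, q.1)) = η i := by
  have hp : ∀ i, IsProbabilityMeasure (η i) := fun i => by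
    have : IsProbabilityMeasure ((η i).map Prod.snd) := by rw [h i]; infer_instance
    exact (Measure.isProbabilityMeasure_map_iff measurable_snd.aemeasurable).1 this
  let ρ : Fin N → Measure (E × E) := fun i => (η i).map Prod.swap
  have hρp : ∀ i, IsProbabilityMeasure (ρ i) := fun i =>
    Measure.isProbabilityMeasure_map measurable_swap.aemeasurable
  have hρ : ∀ i, (ρ i).fst = ν := fun i => by
    rw [← h i, Measure.fst, Measure.map_map measurable_fst measurable_swap]; rfl
  obtain ⟨K, hK, hKm⟩ := exists_pi_kernel (fun i => (ρ i).condKernel)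
  refine ⟨ν ⊗ₘ K, fun i => ?_⟩
  have h1 : (ν ⊗ₘ K).map (Prod.map id (fun x : Fin N → E => x i)) = ρ i := by
    rw [← Measure.compProd_map (measurable_pi_apply i), hKm, ← hρ i]
    exact (ρ i).disintegrate _
  have h2 : (ρ i).map Prod.swap = η i := by
    simp only [ρ]
    rw [Measure.map_map measurable_swap measurable_swap]
    simp
  rw [← h2, ← h1, Measure.map_map measurable_swap (by fun_prop)]
  rfl

theorem exists_selector {N : ℕ} {E : Type*} [NormedAddCommGroup E] [MeasurableSpace E]
    [BorelSpace E] [SecondCountableTopology E] {p : ℝ} (hp : 1 < p)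
    (l : Fin N → ℝ) (hl : ∀ i, 0 < l i) {ε : ℝ} (hε : 0 < ε) :
    ∃ Z : (Fin N → E) → E, Measurable Z ∧
      ∀ x, ∑ i, l i * ‖x i - Z x‖ ^ p ≤ (⨅ z : E, ∑ i, l i * ‖x i - z‖ ^ p) + ε := by
  classical
  have hp0 : 0 ≤ p := by linarith
  have hcx : ∀ z : E, Continuous (fun x : Fin N → E => ∑ i, l i * ‖x i - z‖ ^ p) := fun z =>
    continuous_finsetSum _ fun i _ => continuous_const.mul
      (Continuous.rpow_const (by fun_prop) fun _ => Or.inr hp0)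
  have hcz : ∀ x : Fin N → E, Continuous (fun z : E => ∑ i, l i * ‖x i - z‖ ^ p) := fun x =>
    continuous_finsetSum _ fun i _ => continuous_const.mul
      (Continuous.rpow_const (by fun_prop) fun _ => Or.inr hp0)
  have hbdd : ∀ x : Fin N → E, BddBelow (Set.range fun z : E => ∑ i, l i * ‖x i - z‖ ^ p) :=
    fun x => ⟨0, by
      rintro _ ⟨z, rfl⟩
      exact Finset.sum_nonneg fun i _ => mul_nonneg (hl i).le (by positivity)⟩
  have hI : Measurable (fun x : Fin N → E => ⨅ z : E, ∑ i, l i * ‖x i - z‖ ^ p) :=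
    (upperSemicontinuous_ciInf hbdd fun z => (hcx z).upperSemicontinuous).measurable
  have hex : ∀ x : Fin N → E, ∃ n : ℕ, ∑ i, l i * ‖x i - TopologicalSpace.denseSeq E n‖ ^ p
      < (⨅ z : E, ∑ i, l i * ‖x i - z‖ ^ p) + ε := fun x => by
    obtain ⟨z, hz⟩ := exists_lt_of_ciInf_lt (lt_add_of_pos_right
      (⨅ z : E, ∑ i, l i * ‖x i - z‖ ^ p) hε)
    have ho := (isOpen_Iio (a := (⨅ z : E, ∑ i, l i * ‖x i - z‖ ^ p) + ε)).preimage (hcz x)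
    obtain ⟨_, hw, n, rfl⟩ := (TopologicalSpace.denseRange_denseSeq E).inter_open_nonempty _ ho
      ⟨z, hz⟩
    exact ⟨n, hw⟩
  refine ⟨fun x => TopologicalSpace.denseSeq E (Nat.find (hex x)), ?_, fun x =>
    (Nat.find_spec (hex x)).le⟩
  refine Measurable.find (f := fun n _ => TopologicalSpace.denseSeq E n)
    (fun n => measurable_const) (fun n => ?_) hex
  exact measurableSet_lt (hcx _).measurable (hI.add_const ε)

theorem measurable_cost {E : Type*} [NormedAddCommGroup E] [MeasurableSpace E]
    [BorelSpace E] [SecondCountableTopology E] (p : ℝ) :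
    Measurable (fun q : E × E => ENNReal.ofReal (‖q.1 - q.2‖ ^ p)) := by
  fun_prop

theorem ofReal_cost_sum {N : ℕ} {E : Type*} [NormedAddCommGroup E] (p : ℝ)
    (l : Fin N → ℝ) (hl : ∀ i, 0 < l i) (x : Fin N → E) (z : E) :
    ENNReal.ofReal (∑ i, l i * ‖x i - z‖ ^ p)
      = ∑ i, ENNReal.ofReal (l i) * ENNReal.ofReal (‖x i - z‖ ^ p) := by
  rw [ENNReal.ofReal_sum_of_nonneg fun i _ => mul_nonneg (hl i).le (by positivity)]
  exact Finset.sum_congr rfl fun i _ => ENNReal.ofReal_mul (hl i).le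

set_option maxHeartbeats 2000000

/-- the multi-marginal value `C_{p-MM}` equals the coupled
two-marginal barycenter value `C_{p-C2M} = inf_ν ∑ i, λᵢ W_p^p(μᵢ,ν)` over
probability measures `ν` with finite `p`-th moment. -/
theorem multimarginal_eq_coupled_two_marginal
    (d N : ℕ) (hd : 1 ≤ d) (hN : 1 ≤ N) (p : ℝ) (hp : 1 < p)
    (l : Fin N → ℝ) (hl : ∀ i, 0 < l i) (hsum : ∑ i, l i = 1)
    (μ : Fin N → Measure (EuclideanSpace ℝ (Fin d)))
    (hprob : ∀ i, IsProbabilityMeasure (μ i))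
    (hmom : ∀ i, ∫⁻ y, ENNReal.ofReal (‖y‖ ^ p) ∂(μ i) < ⊤) :
    (⨅ γ : {γ : Measure (Fin N → EuclideanSpace ℝ (Fin d)) //
        ∀ i, γ.map (fun x => x i) = μ i},
      ∫⁻ x, ENNReal.ofReal
        (⨅ z : EuclideanSpace ℝ (Fin d), ∑ i, l i * ‖x i - z‖ ^ p)
          ∂(γ.1))
    = ⨅ ν : {ν : Measure (EuclideanSpace ℝ (Fin d)) //
        IsProbabilityMeasure ν ∧ ∫⁻ y, ENNReal.ofReal (‖y‖ ^ p) ∂ν < ⊤},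
      ∑ i, ENNReal.ofReal (l i) * wassersteinPPow d p (μ i) (ν.1) := by
  have hsumE : ∑ i, ENNReal.ofReal (l i) = 1 := by
    rw [← ENNReal.ofReal_sum_of_nonneg fun i _ => (hl i).le, hsum, ENNReal.ofReal_one]
  have hp0 : 0 < p := by linarith
  apply le_antisymm
  · refine le_iInf fun ⟨ν, hν, hνm⟩ => ?_
    by_cases htop : ∃ i, wassersteinPPow d p (μ i) ν = ⊤
    · obtain ⟨i, hi⟩ := htop
      refine le_trans le_top (top_le_iff.2 ?_)
      refine ENNReal.sum_eq_top.2 ⟨i, Finset.mem_univ i, ?_⟩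
      simp only [hi]
      exact ENNReal.mul_top (by simpa using hl i)
    push Not at htop
    refine ENNReal.le_of_forall_pos_le_add fun ε hε _ => ?_
    have hex : ∀ i, ∃ η : Measure (EuclideanSpace ℝ (Fin d) × EuclideanSpace ℝ (Fin d)),
        (η.map Prod.fst = μ i ∧ η.map Prod.snd = ν) ∧
        ∫⁻ q, ENNReal.ofReal (‖q.1 - q.2‖ ^ p) ∂η ≤ wassersteinPPow d p (μ i) ν + ε := fun i => by
      have hlt : wassersteinPPow d p (μ i) ν < wassersteinPPow d p (μ i) ν + ε :=
        ENNReal.lt_add_right (htop i) (by simpa using hε.ne')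
      obtain ⟨η, hη⟩ := iInf_lt_iff.1 hlt
      exact ⟨η.1, η.2, hη.le⟩
    choose η hη hηc using hex
    obtain ⟨Γ, hΓ⟩ := exists_glue ν η fun i => (hη i).2
    have hmeas : ∀ i, Measurable (fun q : EuclideanSpace ℝ (Fin d) ×
        (Fin N → EuclideanSpace ℝ (Fin d)) => (q.2 i, q.1)) := fun i => by fun_prop
    refine (iInf_le _ (⟨Γ.map Prod.snd, fun i => ?_⟩ :
      {γ : Measure (Fin N → EuclideanSpace ℝ (Fin d)) // ∀ i, γ.map (fun x => x i) = μ i})).trans ?_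
    · rw [← (hη i).1, ← hΓ i, Measure.map_map (measurable_pi_apply i) measurable_snd,
        Measure.map_map measurable_fst (hmeas i)]
      rfl
    change ∫⁻ x, ENNReal.ofReal (⨅ z : EuclideanSpace ℝ (Fin d), ∑ i, l i * ‖x i - z‖ ^ p)
      ∂(Γ.map Prod.snd) ≤ ∑ i, ENNReal.ofReal (l i) * wassersteinPPow d p (μ i) ν + ε
    calc ∫⁻ x, ENNReal.ofReal (⨅ z : EuclideanSpace ℝ (Fin d), ∑ i, l i * ‖x i - z‖ ^ p)
          ∂(Γ.map Prod.snd)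
      _ ≤ ∫⁻ q, ENNReal.ofReal (⨅ z : EuclideanSpace ℝ (Fin d),
            ∑ i, l i * ‖q.2 i - z‖ ^ p) ∂Γ :=
          lintegral_map_le (fun x : Fin N → EuclideanSpace ℝ (Fin d) => ENNReal.ofReal
            (⨅ z : EuclideanSpace ℝ (Fin d), ∑ i, l i * ‖x i - z‖ ^ p)) Prod.snd
      _ ≤ ∫⁻ q, ∑ i, ENNReal.ofReal (l i) * ENNReal.ofReal (‖q.2 i - q.1‖ ^ p) ∂Γ := by
          refine lintegral_mono fun q => ?_
          rw [← ofReal_cost_sum p l hl]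
          refine ENNReal.ofReal_le_ofReal (ciInf_le ⟨0, ?_⟩ q.1)
          rintro _ ⟨z, rfl⟩
          exact Finset.sum_nonneg fun i _ => mul_nonneg (hl i).le (by positivity)
      _ = ∑ i, ENNReal.ofReal (l i) * ∫⁻ q, ENNReal.ofReal (‖q.1 - q.2‖ ^ p) ∂(η i) := by
          have hmc : ∀ i, Measurable (fun q : EuclideanSpace ℝ (Fin d) ×
              (Fin N → EuclideanSpace ℝ (Fin d)) => ENNReal.ofReal (‖q.2 i - q.1‖ ^ p)) :=
            fun i => (measurable_cost p).comp (hmeas i)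
          rw [lintegral_finsetSum _ fun i _ => (hmc i).const_mul (ENNReal.ofReal (l i))]
          refine Finset.sum_congr rfl fun i _ => ?_
          rw [← hΓ i, lintegral_map (measurable_cost p) (hmeas i)]
          exact lintegral_const_mul _ (hmc i)
      _ ≤ ∑ i, ENNReal.ofReal (l i) * (wassersteinPPow d p (μ i) ν + ε) :=
          Finset.sum_le_sum fun i _ => by gcongr; exact hηc i
      _ = _ := by
          simp only [mul_add, Finset.sum_add_distrib]
          rw [← Finset.sum_mul, hsumE, one_mul]
  · refine le_iInf fun ⟨γ, hγ⟩ => ?_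
    refine ENNReal.le_of_forall_pos_le_add fun ε hε hfin => ?_
    obtain ⟨Z, hZ, hZe⟩ := exists_selector (E := EuclideanSpace ℝ (Fin d)) hp l hl
      (NNReal.coe_pos.2 hε)
    let i0 : Fin N := ⟨0, hN⟩
    have hγp : IsProbabilityMeasure γ := by
      have : IsProbabilityMeasure (γ.map (fun x => x i0)) := by rw [hγ i0]; exact hprob i0
      exact (Measure.isProbabilityMeasure_map_iff (measurable_pi_apply i0).aemeasurable).1 this
    have hmeas : ∀ i, Measurable (fun x : Fin N → EuclideanSpace ℝ (Fin d) => (x i, Z x)) :=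
      fun i => (measurable_pi_apply i).prodMk hZ
    have hmc : ∀ i, Measurable (fun x : Fin N → EuclideanSpace ℝ (Fin d) =>
        ENNReal.ofReal (‖x i - Z x‖ ^ p)) := fun i => (measurable_cost p).comp (hmeas i)
    have key : ∑ i, ENNReal.ofReal (l i) * ∫⁻ x, ENNReal.ofReal (‖x i - Z x‖ ^ p) ∂γ
        ≤ (∫⁻ x, ENNReal.ofReal (⨅ z : EuclideanSpace ℝ (Fin d),
            ∑ i, l i * ‖x i - z‖ ^ p) ∂γ) + ε := by
      calc _ = ∫⁻ x, ENNReal.ofReal (∑ i, l i * ‖x i - Z x‖ ^ p) ∂γ := by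
            simp only [ofReal_cost_sum p l hl]
            rw [lintegral_finsetSum _ fun i _ => (hmc i).const_mul (ENNReal.ofReal (l i))]
            exact Finset.sum_congr rfl fun i _ => (lintegral_const_mul _ (hmc i)).symm
        _ ≤ ∫⁻ x, (ENNReal.ofReal (⨅ z : EuclideanSpace ℝ (Fin d),
            ∑ i, l i * ‖x i - z‖ ^ p) + ε) ∂γ := by
            refine lintegral_mono fun x => ?_
            refine (ENNReal.ofReal_le_ofReal (hZe x)).trans ?_
            refine ENNReal.ofReal_add_le.trans ?_
            simp
        _ = _ := by
            rw [lintegral_add_right _ measurable_const]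
            simp
    have hfin0 : ∫⁻ x, ENNReal.ofReal (‖x i0 - Z x‖ ^ p) ∂γ < ⊤ := by
      have h1 := key.trans_lt (ENNReal.add_lt_top.2 ⟨hfin, ENNReal.coe_lt_top⟩)
      have h2 := ENNReal.sum_lt_top.1 h1 i0 (Finset.mem_univ _)
      exact ENNReal.lt_top_of_mul_ne_top_right h2.ne (by simpa using hl i0)
    have hmom0 : ∫⁻ x, ENNReal.ofReal (‖x i0‖ ^ p) ∂γ < ⊤ := by
      have h1 := hmom i0
      rw [← hγ i0, lintegral_map (by fun_prop) (measurable_pi_apply i0)] at h1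
      exact h1
    have hZm : ∫⁻ y, ENNReal.ofReal (‖y‖ ^ p) ∂(γ.map Z) < ⊤ := by
      rw [lintegral_map (by fun_prop) hZ]
      have hb : ∀ x, ENNReal.ofReal (‖Z x‖ ^ p) ≤ (2 : ℝ≥0∞) ^ (p - 1) *
          (ENNReal.ofReal (‖x i0 - Z x‖ ^ p) + ENNReal.ofReal (‖x i0‖ ^ p)) := fun x => by
        simp only [← ENNReal.ofReal_rpow_of_nonneg (norm_nonneg _) hp0.le]
        refine le_trans ?_ (ENNReal.rpow_add_le_mul_rpow_add_rpow _ _ hp.le)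
        refine ENNReal.rpow_le_rpow ?_ hp0.le
        rw [← ENNReal.ofReal_add (norm_nonneg _) (norm_nonneg _)]
        refine ENNReal.ofReal_le_ofReal ?_
        have := norm_sub_le (x i0) (x i0 - Z x)
        rw [sub_sub_cancel] at this
        linarith
      refine (lintegral_mono hb).trans_lt ?_
      rw [lintegral_const_mul' _ _ (by simp), lintegral_add_left (hmc i0)]
      exact ENNReal.mul_lt_top (by simp [lt_top_iff_ne_top]) (ENNReal.add_lt_top.2 ⟨hfin0, hmom0⟩)
    refine (iInf_le _ (⟨γ.map Z, Measure.isProbabilityMeasure_map hZ.aemeasurable, hZm⟩ :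
      {ν : Measure (EuclideanSpace ℝ (Fin d)) //
        IsProbabilityMeasure ν ∧ ∫⁻ y, ENNReal.ofReal (‖y‖ ^ p) ∂ν < ⊤})).trans ?_
    refine le_trans (Finset.sum_le_sum fun i _ => ?_) key
    gcongr
    have h1 : (γ.map (fun x => (x i, Z x))).map Prod.fst = μ i := by
      rw [← hγ i, Measure.map_map measurable_fst (hmeas i)]; rfl
    have h2 : (γ.map (fun x => (x i, Z x))).map Prod.snd = γ.map Z := by
      rw [Measure.map_map measurable_snd (hmeas i)]; rfl
    refine (iInf_le _ ⟨γ.map (fun x => (x i, Z x)), h1, h2⟩).trans ?_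
    exact (lintegral_map (measurable_cost p) (hmeas i)).le
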